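/- arXiv:1204.2222 — 6 statements merged into one kernel-verified Lean document; each statement's English description precedes it below -/
import Mathlib

section
/- Let H be a complex Hilbert space, let U ∈ B(H) be unitary, and suppose U^{n₀} = I for some positive integer n₀. Then for all self-adjoint A, B ∈ B(H), the inequalities B ≤ A ≤ U*BU imply B = A = U*BU. -/
variable {H : Type*} [NormedAddCommGroup H] [InnerProductSpace ℂ H] [CompleteSpace H]

/-- Theorem 2.4(i): if `U` is unitary with `U^{n₀} = I` for some positive integer `n₀`,
then `B ≤ A ≤ U*BU` implies `B = A = U*BU` for self-adjoint `A, B`. -/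
theorem eq_of_le_le_unitary_conj_of_pow_eq_one (U : H →L[ℂ] H)
    (hU : U ∈ unitary (H →L[ℂ] H)) (n₀ : ℕ) (hn₀ : 0 < n₀) (hUn : U ^ n₀ = 1)
    (A B : H →L[ℂ] H) (hA : IsSelfAdjoint A) (hB : IsSelfAdjoint B)
    (h₁ : B ≤ A) (h₂ : A ≤ star U * B * U) :
    B = A ∧ A = star U * B * U := by
  have hBC : B ≤ star U * B * U := h₁.trans h₂
  have key : ∀ n : ℕ, star U * B * U ≤ star (U ^ (n + 1)) * B * U ^ (n + 1) := by
    intro n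
    induction n with
    | zero => simp
    | succ k ih =>
      have h := star_left_conjugate_le_conjugate (hBC.trans ih) U
      have e : star U * (star (U ^ (k + 1)) * B * U ^ (k + 1)) * U
          = star (U ^ (k + 1 + 1)) * B * U ^ (k + 1 + 1) := by
        rw [pow_succ U (k + 1), star_mul]
        simp only [mul_assoc]
      rwa [e] at h
  have hCB : star U * B * U ≤ B := by
    have h := key (n₀ - 1)
    rw [Nat.sub_add_cancel hn₀, hUn] at h
    simpa using h
  exact ⟨le_antisymm h₁ (h₂.trans hCB), le_antisymm h₂ (hCB.trans h₁)⟩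
end

section
/- Let H be a complex Hilbert space and let U, V ∈ B(H) be commuting unitary operators such that U^{n₀} = I and V^{n₀} = I for some positive integer n₀. If A, B ∈ B(H) are self-adjoint with A ≤ U*BU and B ≤ V*AV, then A = U*BU and B = V*AV. -/
variable {H : Type*} [NormedAddCommGroup H] [InnerProductSpace ℂ H] [CompleteSpace H]

/-- Corollary 2.5(i): commuting unitaries with `U^{n₀} = V^{n₀} = I`; if `A ≤ U*BU` and
`B ≤ V*AV` then both inequalities are equalities. -/
theorem antisymmetry_of_pow_eq_one (U V : H →L[ℂ] H)
    (hU : U ∈ unitary (H →L[ℂ] H)) (hV : V ∈ unitary (H →L[ℂ] H))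
    (hcomm : U * V = V * U) (n₀ : ℕ) (hn₀ : 0 < n₀)
    (hUn : U ^ n₀ = 1) (hVn : V ^ n₀ = 1)
    (A B : H →L[ℂ] H) (hA : IsSelfAdjoint A) (hB : IsSelfAdjoint B)
    (h₁ : A ≤ star U * B * U) (h₂ : B ≤ star V * A * V) :
    A = star U * B * U ∧ B = star V * A * V := by
  have hUU : U * star U = 1 := (Unitary.mem_iff.mp hU).2
  have h3 : star U * B * U ≤ star (V * U) * A * (V * U) := by
    have := star_left_conjugate_le_conjugate h₂ U
    simpa only [star_mul, mul_assoc] using this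
  have h4 : A ≤ star (V * U) * A * (V * U) := h₁.trans h3
  have hW : (V * U) ^ n₀ = 1 := by
    have hc : Commute V U := hcomm.symm
    rw [hc.mul_pow, hUn, hVn, one_mul]
  have key : ∀ k : ℕ, star (V * U) * A * (V * U) ≤
      star ((V * U) ^ (k + 1)) * A * (V * U) ^ (k + 1) := by
    intro k
    induction k with
    | zero => simp
    | succ k ih =>
      have h := star_left_conjugate_le_conjugate (h4.trans ih) (V * U)
      rw [pow_succ (V * U) (k + 1), star_mul ((V * U) ^ (k + 1))]
      simpa only [mul_assoc] using h
  have h5 : star (V * U) * A * (V * U) ≤ A := by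
    have h := key (n₀ - 1)
    rw [Nat.sub_add_cancel hn₀, hW] at h
    simpa using h
  have e1 : A = star U * B * U := le_antisymm h₁ (h3.trans h5)
  refine ⟨e1, ?_⟩
  have e2 : star U * B * U = star (V * U) * A * (V * U) :=
    le_antisymm h3 (h5.trans h₁)
  have e3 := congrArg (fun X => U * X * star U) e2
  calc B = (U * star U) * B * (U * star U) := by rw [hUU, one_mul, mul_one]
    _ = U * (star U * B * U) * star U := by simp only [mul_assoc]
    _ = U * (star (V * U) * A * (V * U)) * star U := e3
    _ = (U * star U) * (star V * A * V) * (U * star U) := by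
      simp only [star_mul, mul_assoc]
    _ = star V * A * V := by rw [hUU, one_mul, mul_one]
end

section
/- Let H be a complex Hilbert space and let T ∈ B(H) be an invertible hyponormal operator whose polar decomposition is T = U|T| with U unitary. If U^{n₀} = I for some positive integer n₀, or if U^n → I in the strong operator topology as n → ∞, then T is normal. -/
variable {H : Type*} [NormedAddCommGroup H] [InnerProductSpace ℂ H] [CompleteSpace H]

/-- Lemma 2.2: an invertible hyponormal operator `T` with polar decomposition `T = U|T|`,
where the unitary `U` satisfies `U^{n₀} = I` for some `n₀ ≥ 1` or `Uⁿ → I` strongly,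
is normal. Here `|T| = (T*T)^{1/2}` is given by the continuous functional calculus. -/
theorem normal_of_hyponormal_polar (T U : H →L[ℂ] H) (hT : IsUnit T)
    (hhyp : T * star T ≤ star T * T)
    (hU : U ∈ unitary (H →L[ℂ] H))
    (hpolar : T = U * cfc Real.sqrt (star T * T))
    (h : (∃ n₀ : ℕ, 0 < n₀ ∧ U ^ n₀ = 1) ∨
      ∀ ξ : H, Filter.Tendsto (fun n : ℕ => (U ^ n) ξ) Filter.atTop (nhds ξ)) :
    star T * T = T * star T := by
  have hP : cfc Real.sqrt (star T * T) * cfc Real.sqrt (star T * T) = star T * T := by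
    have hnn : (0 : H →L[ℂ] H) ≤ star T * T := star_mul_self_nonneg T
    rw [← cfc_mul Real.sqrt Real.sqrt (star T * T)]
    conv_rhs => rw [← cfc_id' ℝ (star T * T) (IsSelfAdjoint.of_nonneg hnn)]
    apply cfc_congr
    intro x hx
    exact Real.mul_self_sqrt (spectrum_nonneg_of_nonneg hnn hx)
  have hPs : star (cfc Real.sqrt (star T * T)) = cfc Real.sqrt (star T * T) :=
    (cfc_predicate Real.sqrt (star T * T) : IsSelfAdjoint _).star_eq
  have hTT : T * star T = U * (star T * T) * star U := by
    generalize cfc Real.sqrt (star T * T) = P at *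
    rw [← hP, hpolar, star_mul, hPs]
    simp only [mul_assoc]
  have hex : ∃ n₀ : ℕ, 0 < n₀ ∧ U ^ n₀ = 1 := by
    rcases h with h | h
    · exact h
    · refine ⟨1, one_pos, ?_⟩
      ext ξ
      have h1 := (h ξ).comp (Filter.tendsto_add_atTop_nat 1)
      have h2 := (U.continuous.tendsto ξ).comp (h ξ)
      have h3 : (fun n : ℕ => (U ^ n) ξ) ∘ (fun a => a + 1) = U ∘ fun n : ℕ => (U ^ n) ξ := by
        funext n
        simp only [Function.comp_apply, pow_succ', ContinuousLinearMap.mul_apply]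
      rw [h3] at h1
      simpa using tendsto_nhds_unique h2 h1
  obtain ⟨n, hn, hUn⟩ := hex
  rw [hTT] at hhyp ⊢
  generalize star T * T = A at *
  have hanti : Antitone (fun k : ℕ => U ^ k * A * star (U ^ k)) := by
    refine antitone_nat_of_succ_le fun k => ?_
    have := star_right_conjugate_le_conjugate hhyp (U ^ k)
    simpa only [pow_succ, star_mul, mul_assoc] using this
  have h1 := hanti (show 1 ≤ n from hn)
  simp only [hUn, pow_one, star_one, one_mul, mul_one] at h1
  exact le_antisymm h1 hhyp
end

section
/- Let H be a complex Hilbert space, let A, B ∈ B(H) be positive operators, and let {U_n}_{n∈ℕ} be a sequence of unitary operators such that A^n ≤ U_n* B^n U_n for every n ∈ ℕ and U_n → U in the strong operator topology for some unitary operator U ∈ B(H). Then A^n ≤ U* B^n U for every n ∈ ℕ. -/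
variable {H : Type*} [NormedAddCommGroup H] [InnerProductSpace ℂ H] [CompleteSpace H]

/-- If `Aⁿ ≤ Uₙ* Bⁿ Uₙ` for unitaries `Uₙ` converging strongly to a unitary `U`, then
`Aⁿ ≤ U* Bⁿ U` for every `n`. -/
theorem pow_le_conj_of_sot_lim (A B : H →L[ℂ] H) (hA : 0 ≤ A) (hB : 0 ≤ B)
    (U : ℕ → H →L[ℂ] H) (hU : ∀ n : ℕ, U n ∈ unitary (H →L[ℂ] H))
    (hle : ∀ n : ℕ, A ^ n ≤ star (U n) * B ^ n * U n)
    (W : H →L[ℂ] H) (hW : W ∈ unitary (H →L[ℂ] H))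
    (hlim : ∀ ξ : H, Filter.Tendsto (fun n : ℕ => (U n) ξ) Filter.atTop (nhds (W ξ))) :
    ∀ n : ℕ, A ^ n ≤ star W * B ^ n * W := by
  intro m
  have hconj : ∀ n k : ℕ, (star (U n) * B * U n) ^ k = star (U n) * B ^ k * U n := by
    intro n k
    induction k with
    | zero => simp [Unitary.star_mul_self_of_mem (hU n)]
    | succ k ih =>
      rw [pow_succ, ih, pow_succ]
      have h := Unitary.mul_star_self_of_mem (hU n)
      calc star (U n) * B ^ k * U n * (star (U n) * B * U n)
          = star (U n) * B ^ k * (U n * star (U n)) * B * U n := by simp only [mul_assoc]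
        _ = _ := by rw [h]; simp only [mul_assoc, one_mul]
  have hroot : ∀ (C : H →L[ℂ] H), 0 ≤ C → ∀ n : ℕ, n ≠ 0 →
      (C ^ n) ^ ((m : ℝ) / n) = C ^ m := by
    intro C hC n hn
    rw [← CFC.rpow_natCast C n hC,
      CFC.rpow_rpow_of_exponent_nonneg C _ _ (by positivity) (by positivity) hC,
      mul_div_cancel₀ _ (by exact_mod_cast hn), CFC.rpow_natCast C m hC]
  have key : ∀ n : ℕ, n ≠ 0 → m ≤ n → A ^ m ≤ star (U n) * B ^ m * U n := by
    intro n hn hmn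
    have hC : 0 ≤ star (U n) * B * U n := star_left_conjugate_nonneg hB _
    have h1 := hle n
    rw [← hconj] at h1
    have hp : (m : ℝ) / n ∈ Set.Icc (0 : ℝ) 1 :=
      ⟨by positivity, div_le_one_of_le₀ (by exact_mod_cast hmn) (by positivity)⟩
    have h2 := CFC.rpow_le_rpow hp h1
    rwa [hroot A hA n hn, hroot _ hC n hn, hconj] at h2
  have hsa : IsSelfAdjoint (star W * B ^ m * W - A ^ m) := by
    have hB' : IsSelfAdjoint (B ^ m) := (IsSelfAdjoint.of_nonneg hB).pow m
    exact (hB'.conjugate' W).sub ((IsSelfAdjoint.of_nonneg hA).pow m)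
  rw [ContinuousLinearMap.le_def, ContinuousLinearMap.isPositive_def']
  refine ⟨hsa, fun x => ?_⟩
  have form : ∀ V : H →L[ℂ] H, (star V * B ^ m * V - A ^ m).reApplyInnerSelf x
      = RCLike.re (inner ℂ ((B ^ m) (V x)) (V x)) - RCLike.re (inner ℂ ((A ^ m) x) x) := by
    intro V
    rw [ContinuousLinearMap.reApplyInnerSelf_apply, ContinuousLinearMap.sub_apply,
      inner_sub_left, map_sub, ContinuousLinearMap.star_eq_adjoint,
      ContinuousLinearMap.mul_apply, ContinuousLinearMap.mul_apply,
      ContinuousLinearMap.adjoint_inner_left]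
  have hcont : Continuous fun y : H =>
      RCLike.re (inner ℂ ((B ^ m) y) y) - RCLike.re (inner ℂ ((A ^ m) x) x) := by
    fun_prop
  have ht := (hcont.tendsto (W x)).comp (hlim x)
  rw [form]
  refine ge_of_tendsto ht ?_
  filter_upwards [Filter.eventually_ge_atTop (m + 1)] with n hn
  have h := key n (by omega) (by omega)
  rw [ContinuousLinearMap.le_def, ContinuousLinearMap.isPositive_def'] at h
  have h3 := h.2 x
  rw [form] at h3
  exact h3
end

section
/- Let H be a complex Hilbert space and let A, B ∈ B(H) be positive operators. For each positive integer n set K_n = {U ∈ B(H) : U unitary and A^n ≤ U* B^n U}. Suppose that for some positive integer n₀ the set K_{n₀} is nonempty and compact in the strong operator topology. Then there exists a unitary operator U ∈ B(H) such that A^n ≤ U* B^n U for every positive integer n. -/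
variable {H : Type*} [NormedAddCommGroup H] [InnerProductSpace ℂ H] [CompleteSpace H]


open Filter Topology


/-- A positive invertible below `b`: squares are comparable up to a unitary. -/
lemma aux_double {R : Type*} [CStarAlgebra R] [PartialOrder R] [StarOrderedRing R]
    {a b : R} (ha : IsStrictlyPositive a) (hab : a ≤ b) :
    ∃ u ∈ unitary R, a * a ≤ star u * (b * b) * u := by
  have hb : IsStrictlyPositive b := ha.of_le hab
  set x := CFC.sqrt a with hx
  set y := CFC.sqrt b with hy
  have hxs : star x = x := (CFC.sqrt_nonneg a).isSelfAdjoint.star_eq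
  have hys : star y = y := (CFC.sqrt_nonneg b).isSelfAdjoint.star_eq
  have hxx : x * x = a := CFC.sqrt_mul_sqrt_self a ha.nonneg
  have hyy : y * y = b := CFC.sqrt_mul_sqrt_self b hb.nonneg
  have hxu : IsUnit x := ha.isUnit_cfcSqrt a
  have hyu : IsUnit y := hb.isUnit_cfcSqrt b
  have htu : IsUnit (y * x) := hyu.mul hxu
  set t := y * x with ht
  have hst : star t = x * y := by simp [ht, hxs, hys]
  have hps : IsStrictlyPositive (star t * t) :=
    ⟨star_mul_self_nonneg t, htu.star.mul htu⟩
  set m := CFC.sqrt (star t * t) with hm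
  have hms : star m = m := (CFC.sqrt_nonneg _).isSelfAdjoint.star_eq
  have hmm : m * m = star t * t := CFC.sqrt_mul_sqrt_self _ hps.nonneg
  have hmu : IsUnit m := hps.isUnit_cfcSqrt _
  obtain ⟨M, hM⟩ := hmu
  obtain ⟨N, hN⟩ := htu
  have hr : star (↑M⁻¹ : R) = ↑M⁻¹ := by
    have : star M = M := Units.ext (by simpa [hM] using hms)
    rw [← Units.coe_star, star_inv, this]
  set r : R := ↑M⁻¹ with hrdef
  have hrm : r * m = 1 := by rw [← hM]; simp [hrdef]
  have hmr : m * r = 1 := by rw [← hM]; simp [hrdef]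
  have hsu : star (t * r) * (t * r) = 1 := by
    calc star (t * r) * (t * r) = r * (star t * t) * r := by rw [star_mul, hr]; noncomm_ring
      _ = (r * m) * (m * r) := by rw [← hmm]; noncomm_ring
      _ = 1 := by rw [hrm, hmr, one_mul]
  have hunit : IsUnit (t * r) := by
    rw [← hN, hrdef]; exact (N * M⁻¹).isUnit
  have hus : (t * r) * star (t * r) = 1 := by
    obtain ⟨w, hw⟩ := hunit
    rw [← hw] at hsu ⊢
    have : star (w : R) = ↑w⁻¹ := by
      rw [← mul_one (star (w : R)), ← w.mul_inv, ← mul_assoc, hsu, one_mul]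
    rw [this, w.mul_inv]
  refine ⟨t * r, ⟨hsu, hus⟩, ?_⟩
  have h1 : a * a ≤ star t * t := by
    have := star_left_conjugate_le_conjugate hab x
    rw [hxs] at this
    calc a * a = x * a * x := by rw [← hxx]; noncomm_ring
      _ ≤ x * b * x := this
      _ = star t * t := by rw [hst, ht, ← hyy]; noncomm_ring
  have h2 : t * star t ≤ b * b := by
    have := star_left_conjugate_le_conjugate hab y
    rw [hys] at this
    calc t * star t = y * a * y := by rw [hst, ht, ← hxx]; noncomm_ring
      _ ≤ y * b * y := this
      _ = b * b := by rw [← hyy]; noncomm_ring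
  have h3 : star (t * r) * (t * star t) * (t * r) = star t * t := by
    calc star (t * r) * (t * star t) * (t * r)
        = r * (star t * t) * (star t * t) * r := by rw [star_mul, hr]; noncomm_ring
      _ = (r * m) * (m * m) * (m * r) := by rw [← hmm]; noncomm_ring
      _ = star t * t := by rw [hrm, hmr, one_mul, mul_one, hmm]
  calc a * a ≤ star t * t := h1
    _ = _ := h3.symm
    _ ≤ _ := star_left_conjugate_le_conjugate h2 _

lemma aux_conj_pow {R : Type*} [CStarAlgebra R]
    {b u : R} (hu : u ∈ unitary R) (n : ℕ) : star u * b ^ n * u = (star u * b * u) ^ n := by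
  have h1 : star u * u = 1 := hu.1
  have h2 : u * star u = 1 := hu.2
  induction n with
  | zero => simp [h1]
  | succ n ih =>
    rw [pow_succ (star u * b * u), ← ih, pow_succ]
    calc star u * (b ^ n * b) * u = star u * b ^ n * 1 * b * u := by noncomm_ring
      _ = _ := by rw [← h2]; noncomm_ring

lemma aux_pow2 {R : Type*} [CStarAlgebra R] [PartialOrder R] [StarOrderedRing R]
    {a b u : R} (ha : IsStrictlyPositive a) (hu : u ∈ unitary R) (hab : a ≤ star u * b * u)
    (k : ℕ) : ∃ v ∈ unitary R, a ^ (2 ^ k) ≤ star v * b ^ (2 ^ k) * v := by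
  induction k with
  | zero => exact ⟨u, hu, by simpa using hab⟩
  | succ k ih =>
    obtain ⟨v, hv, h⟩ := ih
    have hs : IsStrictlyPositive (a ^ (2 ^ k)) := by
      rw [← CFC.rpow_natCast a _ ha.nonneg]; exact ha.rpow a _
    obtain ⟨w, hw, h'⟩ := aux_double hs h
    refine ⟨v * w, mul_mem hv hw, ?_⟩
    rw [pow_succ, pow_mul, pow_two, pow_mul, pow_two (b ^ _)]
    refine h'.trans (le_of_eq ?_)
    have h2 : v * star v = 1 := hv.2
    rw [star_mul]
    calc _ = star w * (star v * b ^ 2 ^ k * (v * star v) * b ^ 2 ^ k * v) * w := by noncomm_ring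
      _ = _ := by rw [h2]; noncomm_ring

/-- Loewner-Heinz for natural powers. -/
lemma aux_root {R : Type*} [CStarAlgebra R] [PartialOrder R] [StarOrderedRing R]
    {a b : R} (ha : 0 ≤ a) (hb : 0 ≤ b) {m n : ℕ} (hm : m ≤ n) (hn : 0 < n)
    (h : a ^ n ≤ b ^ n) : a ^ m ≤ b ^ m := by
  have hn' : (0 : ℝ) < n := by exact_mod_cast hn
  have hp : (m / n : ℝ) ∈ Set.Icc (0 : ℝ) 1 :=
    ⟨by positivity, by rw [div_le_one hn']; exact_mod_cast hm⟩
  have key : ∀ c : R, 0 ≤ c → (c ^ n) ^ (m / n : ℝ) = c ^ m := by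
    intro c hc
    rw [← CFC.rpow_natCast c n hc, CFC.rpow_rpow_of_exponent_nonneg c _ _ (by positivity) hp.1 hc,
      mul_div_cancel₀ _ hn'.ne', CFC.rpow_natCast c m hc]
  have := CFC.rpow_le_rpow hp h
  rwa [key a ha, key b hb] at this

lemma aux_pow_nonneg {R : Type*} [CStarAlgebra R] [PartialOrder R] [StarOrderedRing R]
    {a : R} (ha : 0 ≤ a) (n : ℕ) : 0 ≤ a ^ n := by
  rw [← CFC.rpow_natCast a n ha]; exact CFC.rpow_nonneg

lemma aux_clm_apply {E ι : Type*} [NormedAddCommGroup E] [NormedSpace ℂ E] {l : Filter ι}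
    {f : ι → E →L[ℂ] E} {g : ι → E} {f₀ : E →L[ℂ] E} {g₀ : E}
    (hf : Tendsto f l (𝓝 f₀)) (hg : Tendsto g l (𝓝 g₀)) :
    Tendsto (fun i => f i (g i)) l (𝓝 (f₀ g₀)) :=
  ((continuous_fst.clm_apply continuous_snd :
    Continuous (fun p : (E →L[ℂ] E) × E => p.1 p.2)).tendsto (f₀, g₀)).comp (hf.prodMk_nhds hg)

/-- Theorem 2.9 (strong operator topology case): if the set
`K_{n₀} = {U unitary : A^{n₀} ≤ U* B^{n₀} U}` is nonempty and compact in the strong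
operator topology (encoded via the embedding `T ↦ ⇑T` into `H → H` with the topology of
pointwise convergence), then some unitary `U` satisfies `Aⁿ ≤ U* Bⁿ U` for all `n ≥ 1`. -/
theorem exists_unitary_pow_le_of_sot_compact (A B : H →L[ℂ] H) (hA : 0 ≤ A) (hB : 0 ≤ B)
    (n₀ : ℕ) (hn₀ : 0 < n₀)
    (hne : {U : H →L[ℂ] H | U ∈ unitary (H →L[ℂ] H) ∧
        A ^ n₀ ≤ star U * B ^ n₀ * U}.Nonempty)
    (hcpt : IsCompact ((fun T : H →L[ℂ] H => (T : H → H)) ''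
        {U : H →L[ℂ] H | U ∈ unitary (H →L[ℂ] H) ∧ A ^ n₀ ≤ star U * B ^ n₀ * U})) :
    ∃ U ∈ unitary (H →L[ℂ] H), ∀ n : ℕ, 0 < n → A ^ n ≤ star U * B ^ n * U := by
  classical
  obtain ⟨U0, hU0, hle0⟩ := hne
  have hP : 0 ≤ A ^ n₀ := aux_pow_nonneg hA _
  have hQ : 0 ≤ B ^ n₀ := aux_pow_nonneg hB _
  set P := A ^ n₀ with hPdef
  set Q := B ^ n₀ with hQdef
  let e : ℕ → ℝ := fun k => 1 / ((k : ℝ) + 1)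
  have he : ∀ k, 0 < e k := fun k => by positivity
  have hadd : ∀ (k : ℕ) (U : H →L[ℂ] H), U ∈ unitary (H →L[ℂ] H) →
      star U * (Q + algebraMap ℝ _ (e k)) * U = star U * Q * U + algebraMap ℝ _ (e k) := by
    intro k U hU
    have h1 : star U * U = 1 := hU.1
    rw [mul_add, add_mul, ← Algebra.commutes (e k) (star U), mul_assoc (algebraMap ℝ _ (e k)), h1,
      mul_one]
  have hen : ∀ k, (0 : H →L[ℂ] H) ≤ algebraMap ℝ _ (e k) := fun k =>
    algebraMap_nonneg _ (he k).le
  have hsp : ∀ k, IsStrictlyPositive (P + algebraMap ℝ (H →L[ℂ] H) (e k)) := fun k =>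
    IsStrictlyPositive.nonneg_add hP
      ⟨hen k, (isUnit_iff_ne_zero.mpr (he k).ne').map (algebraMap ℝ (H →L[ℂ] H))⟩
  have hex : ∀ k, ∃ U ∈ unitary (H →L[ℂ] H), (P + algebraMap ℝ _ (e k)) ^ (2 ^ k) ≤
      star U * (Q + algebraMap ℝ _ (e k)) ^ (2 ^ k) * U := fun k =>
    aux_pow2 (hsp k) hU0 (by rw [hadd k U0 hU0]; gcongr) k
  choose U hU hUle using hex
  have hstep : ∀ j k, j ≤ k → (P + algebraMap ℝ _ (e k)) ^ (2 ^ j) ≤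
      star (U k) * (Q + algebraMap ℝ _ (e k)) ^ (2 ^ j) * (U k) := by
    intro j k hjk
    have h := hUle k
    rw [aux_conj_pow (hU k)] at h ⊢
    exact aux_root (hsp k).nonneg
      (star_left_conjugate_nonneg (add_nonneg hQ (hen k)) _)
      (Nat.pow_le_pow_right (by norm_num) hjk) (by positivity) h
  have hK : ∀ k, P ≤ star (U k) * Q * U k := by
    intro k
    have h := hstep 0 k (Nat.zero_le k)
    rw [pow_zero, pow_one, pow_one, hadd k _ (hU k)] at h
    exact le_of_add_le_add_right h
  -- cluster point
  let F : Ultrafilter ℕ := hyperfilter ℕ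
  have hF : (F : Filter ℕ) ≤ atTop := Nat.hyperfilter_le_atTop
  obtain ⟨f, ⟨V, ⟨hV, -⟩, rfl⟩, hlim⟩ := hcpt.ultrafilter_le_nhds
    (F.map (fun k => (U k : H → H)))
    (by
      rw [le_principal_iff]
      exact Filter.mem_map.mpr (Filter.univ_mem' (fun k => ⟨U k, ⟨hU k, hK k⟩, rfl⟩)))
  have hlim' : Tendsto (fun k => (U k : H → H)) F (𝓝 (V : H → H)) := hlim
  have hpt : ∀ x, Tendsto (fun k => U k x) F (𝓝 (V x)) := fun x =>
    (tendsto_pi_nhds.mp hlim') x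
  have hpert : ∀ (S : H →L[ℂ] H) (j : ℕ),
      Tendsto (fun k => (S + algebraMap ℝ _ (e k)) ^ (2 ^ j)) F (𝓝 (S ^ (2 ^ j))) := by
    intro S j
    have h0 : Tendsto e F (𝓝 0) := tendsto_one_div_add_atTop_nhds_zero_nat.mono_left hF
    have h1 : Tendsto (fun k => algebraMap ℝ (H →L[ℂ] H) (e k)) F (𝓝 0) := by
      have := ((algebraMapCLM ℝ (H →L[ℂ] H)).continuous.tendsto 0).comp h0
      simpa [Function.comp_def] using this
    have h2 := (tendsto_const_nhds (x := S)).add h1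
    rw [add_zero] at h2
    exact h2.pow _
  have hfin : ∀ j : ℕ, P ^ (2 ^ j) ≤ star V * Q ^ (2 ^ j) * V := by
    intro j
    rw [ContinuousLinearMap.le_def, ContinuousLinearMap.isPositive_def']
    refine ⟨?_, fun x => ?_⟩
    · refine IsSelfAdjoint.sub ?_ ?_
      · exact (star_left_conjugate_nonneg (aux_pow_nonneg hQ _) _).isSelfAdjoint
      · exact (aux_pow_nonneg hP _).isSelfAdjoint
    · have hreal : ∀ (S T W : H →L[ℂ] H), (star W * T * W - S).reApplyInnerSelf x =
          RCLike.re (inner ℂ (T (W x)) (W x)) - RCLike.re (inner ℂ (S x) x) := by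
        intro S T W
        simp [ContinuousLinearMap.reApplyInnerSelf_apply, inner_sub_left,
          ContinuousLinearMap.star_eq_adjoint, ContinuousLinearMap.adjoint_inner_left]
      rw [hreal]
      have hT : Tendsto (fun k => RCLike.re (inner ℂ (((Q + algebraMap ℝ (H →L[ℂ] H) (e k)) ^ (2 ^ j)) (U k x))
          (U k x)) - RCLike.re (inner ℂ (((P + algebraMap ℝ (H →L[ℂ] H) (e k)) ^ (2 ^ j)) x) x)) F
          (𝓝 (RCLike.re (inner ℂ ((Q ^ (2 ^ j)) (V x)) (V x))
            - RCLike.re (inner ℂ ((P ^ (2 ^ j)) x) x))) := by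
        refine Tendsto.sub ?_ ?_
        · exact (RCLike.continuous_re.tendsto _).comp
            ((aux_clm_apply (hpert Q j) (hpt x)).inner (hpt x))
        · exact (RCLike.continuous_re.tendsto _).comp
            ((aux_clm_apply (hpert P j) tendsto_const_nhds).inner tendsto_const_nhds)
      refine ge_of_tendsto hT ?_
      filter_upwards [hF (eventually_ge_atTop j)] with k hk
      have h := hstep j k hk
      rw [ContinuousLinearMap.le_def, ContinuousLinearMap.isPositive_def'] at h
      have := h.2 x
      rwa [hreal] at this
  refine ⟨V, hV, fun n hn => ?_⟩
  have h := hfin n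
  rw [hPdef, hQdef, ← pow_mul, ← pow_mul, aux_conj_pow hV] at h
  rw [aux_conj_pow hV]
  refine aux_root hA (star_left_conjugate_nonneg hB _) ?_ (by positivity) h
  calc n ≤ 2 ^ n := Nat.lt_two_pow_self.le
    _ ≤ n₀ * 2 ^ n := Nat.le_mul_of_pos_left _ hn₀
end

section
/- Let H be a complex Hilbert space, let A, B ∈ B(H) be operators with 0 < A (A positive and invertible) and A ≤ U* B U for some unitary U ∈ B(H), and let g : [0,∞) → [0,∞) be a continuous operator monotone function with g(A) > 0. Then for every real r > 0 there exists a unitary V ∈ B(H) with g(A)^{2r} ≤ V* U* g(B)^{2r} U V; in particular g(A)^{2r} ≤_u g(B)^{2r}. -/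
variable {H : Type*} [NormedAddCommGroup H] [InnerProductSpace ℂ H] [CompleteSpace H]

section Helpers

variable {E : Type*} [CStarAlgebra E] [PartialOrder E] [StarOrderedRing E]

lemma aux_le_of_conj {P Z W : E} (hP : 0 ≤ P) (hPu : IsUnit P) (hZ : 0 ≤ Z) (hW : 0 ≤ W)
    (h : Z * P * Z ≤ W * P * W) : Z ≤ W := by
  have hq0 : 0 ≤ CFC.sqrt P := CFC.sqrt_nonneg P
  have hqu : IsUnit (CFC.sqrt P) := (CFC.isUnit_sqrt_iff P hP).2 hPu
  have hqq : CFC.sqrt P * CFC.sqrt P = P := CFC.sqrt_mul_sqrt_self P hP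
  generalize CFC.sqrt P = q at *
  have key : ∀ X : E, (q * X * q) * (q * X * q) = q * (X * P * X) * q := by
    intro X
    rw [← hqq]
    noncomm_ring
  have h1 : (q * Z * q) * (q * Z * q) ≤ (q * W * q) * (q * W * q) := by
    rw [key, key]
    exact conjugate_le_conjugate_of_nonneg h hq0
  have h2 := CFC.sqrt_le_sqrt _ _ h1
  rw [CFC.sqrt_mul_self _ (conjugate_nonneg_of_nonneg hZ hq0),
    CFC.sqrt_mul_self _ (conjugate_nonneg_of_nonneg hW hq0)] at h2
  have h3 : 0 ≤ star q * (W - Z) * q := by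
    rw [(IsSelfAdjoint.of_nonneg hq0).star_eq, mul_sub, sub_mul]
    exact sub_nonneg.2 h2
  exact sub_nonneg.1 ((IsUnit.star_left_conjugate_nonneg_iff hqu).1 h3)

lemma aux_exists {P c : E} (hP : 0 ≤ P) (hPu : IsUnit P) (hc : 0 ≤ c) :
    ∃ W : E, 0 ≤ W ∧ W * P * W = c := by
  have hq0 : 0 ≤ CFC.sqrt P := CFC.sqrt_nonneg P
  have hqu : IsUnit (CFC.sqrt P) := (CFC.isUnit_sqrt_iff P hP).2 hPu
  have hqq : CFC.sqrt P * CFC.sqrt P = P := CFC.sqrt_mul_sqrt_self P hP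
  generalize CFC.sqrt P = q at *
  obtain ⟨u, rfl⟩ := hqu
  have hs : star (u : E) = u := (IsSelfAdjoint.of_nonneg hq0).star_eq
  have hi : star ((u⁻¹ : Eˣ) : E) = (u⁻¹ : Eˣ) := by
    have : star u = u := Units.ext hs
    rw [← Units.coe_star_inv, this]
  have hm0 := CFC.sqrt_nonneg ((u : E) * c * u)
  have hmm := CFC.sqrt_mul_sqrt_self ((u : E) * c * u) (conjugate_nonneg_of_nonneg hc hq0)
  generalize CFC.sqrt ((u : E) * c * u) = m at *
  refine ⟨((u⁻¹ : Eˣ) : E) * m * (u⁻¹ : Eˣ), ?_, ?_⟩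
  · have := star_left_conjugate_nonneg hm0 ((u⁻¹ : Eˣ) : E)
    rwa [hi] at this
  · rw [← hqq]
    calc ((u⁻¹ : Eˣ) : E) * m * (u⁻¹ : Eˣ) * ((u : E) * u) * (((u⁻¹ : Eˣ) : E) * m * (u⁻¹ : Eˣ))
        = ((u⁻¹ : Eˣ) : E) * (m * m) * (u⁻¹ : Eˣ) := by simp [mul_assoc]
      _ = c := by rw [hmm]; simp [mul_assoc]

lemma aux_one_le_sq {Z : E} (hZ : 1 ≤ Z) : 1 ≤ Z * Z := by
  have hZ0 : 0 ≤ Z := zero_le_one.trans hZ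
  have h := conjugate_le_conjugate_of_nonneg hZ (CFC.sqrt_nonneg Z)
  have hqq := CFC.sqrt_mul_sqrt_self Z hZ0
  have e : CFC.sqrt Z * Z * CFC.sqrt Z = Z * Z := by
    generalize CFC.sqrt Z = q at *
    subst hqq
    noncomm_ring
  rw [e, mul_one, hqq] at h
  exact hZ.trans h

lemma aux_step {a b Z : E} (ha : 0 ≤ a) (hau : IsUnit a) (hZ : 1 ≤ Z) (h : Z * a * Z = b) :
    ∃ W : E, 1 ≤ W ∧ W * (a * a) * W = b * b := by
  have hZ0 : 0 ≤ Z := zero_le_one.trans hZ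
  have hb : 0 ≤ b := h ▸ conjugate_nonneg_of_nonneg ha hZ0
  have sq0 : ∀ x : E, 0 ≤ x → 0 ≤ x * x := fun x hx => by
    have := star_mul_self_nonneg x
    rwa [(IsSelfAdjoint.of_nonneg hx).star_eq] at this
  obtain ⟨W, hW0, hW⟩ := aux_exists (sq0 a ha) (hau.mul hau) (sq0 b hb)
  refine ⟨W, hZ.trans (aux_le_of_conj (sq0 a ha) (hau.mul hau) hZ0 hW0 ?_), hW⟩
  rw [hW, ← h]
  have h1 := conjugate_le_conjugate_of_nonneg
    (conjugate_le_conjugate_of_nonneg (aux_one_le_sq hZ) ha) hZ0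
  calc Z * (a * a) * Z = Z * (a * 1 * a) * Z := by rw [mul_one]
    _ ≤ _ := h1
    _ = _ := by noncomm_ring

lemma aux_pow {a b : E} (ha : 0 ≤ a) (hau : IsUnit a) (hab : a ≤ b) (n : ℕ) :
    0 ≤ a ^ (2 ^ n) ∧ ∃ Z : E, 1 ≤ Z ∧ Z * a ^ (2 ^ n) * Z = b ^ (2 ^ n) := by
  induction n with
  | zero =>
    simp only [pow_zero, pow_one]
    obtain ⟨Z, hZ0, hZ⟩ := aux_exists ha hau (ha.trans hab)
    refine ⟨ha, Z, aux_le_of_conj ha hau zero_le_one hZ0 ?_, hZ⟩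
    rwa [hZ, one_mul, mul_one]
  | succ n ih =>
    obtain ⟨h0, Z, hZ, h⟩ := ih
    have e : ∀ x : E, x ^ (2 ^ (n + 1)) = x ^ (2 ^ n) * x ^ (2 ^ n) := fun x => by
      rw [← pow_add]; congr 1; ring
    rw [e, e]
    refine ⟨?_, aux_step h0 (hau.pow _) hZ h⟩
    have := star_mul_self_nonneg (a ^ (2 ^ n))
    rwa [(IsSelfAdjoint.of_nonneg h0).star_eq] at this

lemma aux_unitary {a b Z : E} (ha : 0 ≤ a) (hau : IsUnit a) (hZ : 1 ≤ Z) (h : Z * a * Z = b) :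
    ∃ V ∈ unitary E, a ≤ star V * b * V := by
  have hZ0 : 0 ≤ Z := zero_le_one.trans hZ
  have hZu : IsUnit Z := CStarAlgebra.isUnit_of_le 1 hZ
  have hZs := (IsSelfAdjoint.of_nonneg hZ0).star_eq
  have hq0 : 0 ≤ CFC.sqrt a := CFC.sqrt_nonneg a
  have hqu : IsUnit (CFC.sqrt a) := (CFC.isUnit_sqrt_iff a ha).2 hau
  have hqq : CFC.sqrt a * CFC.sqrt a = a := CFC.sqrt_mul_sqrt_self a ha
  generalize CFC.sqrt a = q at *
  have hqs := (IsSelfAdjoint.of_nonneg hq0).star_eq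
  obtain ⟨t, ht⟩ := hZu.mul hqu
  have htu : IsUnit (star (t : E) * t) := t.isUnit.star.mul t.isUnit
  have ht0 : 0 ≤ star (t : E) * t := star_mul_self_nonneg _
  have hp0 := CFC.sqrt_nonneg (star (t : E) * t)
  have hpu := (CFC.isUnit_sqrt_iff _ ht0).2 htu
  have hpp := CFC.sqrt_mul_sqrt_self _ ht0
  generalize CFC.sqrt (star (t : E) * t) = p at *
  obtain ⟨u, rfl⟩ := hpu
  have hs : star (u : E) = u := (IsSelfAdjoint.of_nonneg hp0).star_eq
  have hi : star ((u⁻¹ : Eˣ) : E) = (u⁻¹ : Eˣ) := by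
    have : star u = u := Units.ext hs
    rw [← Units.coe_star_inv, this]
  have hb : b = t * star (t : E) := by
    rw [ht, star_mul, hZs, hqs, ← h, ← hqq]
    noncomm_ring
  have hle : a ≤ star (t : E) * t := by
    have := conjugate_le_conjugate_of_nonneg (aux_one_le_sq hZ) hq0
    rw [mul_one, hqq] at this
    refine this.trans_eq ?_
    rw [ht, star_mul, hZs, hqs]
    noncomm_ring
  have hVV : star ((t : E) * (u⁻¹ : Eˣ)) * ((t : E) * (u⁻¹ : Eˣ)) = 1 := by
    rw [star_mul, hi]
    calc _ = ((u⁻¹ : Eˣ) : E) * (star (t : E) * t) * (u⁻¹ : Eˣ) := by noncomm_ring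
      _ = 1 := by rw [← hpp]; simp [mul_assoc]
  refine ⟨(t : E) * (u⁻¹ : Eˣ), ?_, ?_⟩
  · refine Unitary.mem_iff.2 ⟨hVV, ?_⟩
    have hVu : IsUnit ((t : E) * (u⁻¹ : Eˣ)) := t.isUnit.mul (u⁻¹).isUnit
    obtain ⟨v, hv⟩ := hVu
    rw [← hv] at hVV ⊢
    rw [Units.eq_inv_of_mul_eq_one_right hVV]
    simp
  · refine hle.trans_eq ?_
    rw [hb, star_mul, hi]
    symm
    calc _ = ((u⁻¹ : Eˣ) : E) * (star (t : E) * t) * (star (t : E) * t) * (u⁻¹ : Eˣ) := by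
          noncomm_ring
      _ = star (t : E) * t := by rw [← hpp]; simp [mul_assoc]

lemma aux_main {C D : E} (hC : 0 ≤ C) (hCu : IsUnit C) (hCD : C ≤ D) {s : ℝ} (hs : 0 < s) :
    ∃ V ∈ unitary E, cfc (fun x : ℝ => x ^ s) C ≤ star V * cfc (fun x : ℝ => x ^ s) D * V := by
  obtain ⟨n, hn⟩ := pow_unbounded_of_one_lt s (one_lt_two (α := ℝ))
  have h2 : (0 : ℝ) < 2 ^ n := by positivity
  have hD : 0 ≤ D := hC.trans hCD
  have e : ∀ X : E, 0 ≤ X → cfc (fun x : ℝ => x ^ s) X = (X ^ (s / 2 ^ n)) ^ (2 ^ n) := by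
    intro X hX
    rw [← CFC.rpow_eq_cfc_real hX, ← CFC.rpow_natCast _ _ CFC.rpow_nonneg,
      CFC.rpow_rpow_of_exponent_nonneg X _ _ (by positivity) (by positivity) hX]
    congr 1
    push_cast
    field_simp
  have hle : C ^ (s / 2 ^ n) ≤ D ^ (s / 2 ^ n) :=
    CFC.rpow_le_rpow ⟨by positivity, (div_le_one h2).2 hn.le⟩ hCD
  have hu : IsUnit (C ^ (s / 2 ^ n)) := (CFC.isUnit_rpow_iff C _ (by positivity) hC).2 hCu
  obtain ⟨h0, Z, hZ, h⟩ := aux_pow CFC.rpow_nonneg hu hle n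
  rw [e C hC, e D hD]
  exact aux_unitary h0 (hu.pow _) hZ h

lemma aux_conj {U X : E} (hU : U ∈ unitary E) (hX : IsSelfAdjoint X) (f : ℝ → ℝ)
    (hf : ContinuousOn f (spectrum ℝ X)) :
    cfc f (star U * X * U) = star U * cfc f X * U := by
  have := StarAlgHomClass.map_cfc (S := ℂ) (Unitary.conjStarAlgAut ℂ E (star ⟨U, hU⟩)) f X hf
    (by
      change Continuous (fun x => (star U) * x * star (star U))
      fun_prop) hX (hX.map _)
  simpa using this.symm

end Helpers

/-- Step in the proof of Theorem 2.8: if `A > 0` (positive and invertible), `A ≤ U*BU`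
for a unitary `U`, and `g : [0,∞) → [0,∞)` is a continuous operator monotone function
with `g(A) > 0`, then for every `r > 0` there is a unitary `V` with
`g(A)^{2r} ≤ V* U* g(B)^{2r} U V`; in particular `g(A)^{2r} ≤ᵤ g(B)^{2r}`. -/
theorem rpow_leu_of_le_unitary_conj (A B U : H →L[ℂ] H)
    (hA : 0 ≤ A) (hAinv : IsUnit A)
    (hU : U ∈ unitary (H →L[ℂ] H)) (hAB : A ≤ star U * B * U)
    (g : ℝ → ℝ) (hg_cont : ContinuousOn g (Set.Ici 0))
    (hg_nonneg : ∀ x : ℝ, 0 ≤ x → 0 ≤ g x)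
    (hg_opMonotone : ∀ X Y : H →L[ℂ] H, 0 ≤ X → 0 ≤ Y → X ≤ Y → cfc g X ≤ cfc g Y)
    (hgA_pos : 0 ≤ cfc g A) (hgA_inv : IsUnit (cfc g A)) :
    ∀ r : ℝ, 0 < r →
      ∃ V ∈ unitary (H →L[ℂ] H),
        cfc (fun x : ℝ => x ^ (2 * r)) (cfc g A) ≤
          star V * (star U * cfc (fun x : ℝ => x ^ (2 * r)) (cfc g B) * U) * V ∧
        ∃ W ∈ unitary (H →L[ℂ] H),
          cfc (fun x : ℝ => x ^ (2 * r)) (cfc g A) ≤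
            star W * cfc (fun x : ℝ => x ^ (2 * r)) (cfc g B) * W := by
  intro r hr
  have hr2 : 0 < 2 * r := by positivity
  have hUU : U * star U = 1 := (Unitary.mem_iff.1 hU).2
  have hB : 0 ≤ B := by
    have h1 := star_right_conjugate_nonneg (hA.trans hAB) U
    have e : U * (star U * B * U) * star U = B := by
      calc _ = (U * star U) * B * (U * star U) := by noncomm_ring
        _ = B := by rw [hUU]; simp
    rwa [e] at h1
  have hgBc : ContinuousOn g (spectrum ℝ B) :=
    hg_cont.mono fun x hx => spectrum_nonneg_of_nonneg hB hx
  have hgB : 0 ≤ cfc g B :=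
    cfc_nonneg fun x hx => hg_nonneg x (spectrum_nonneg_of_nonneg hB hx)
  have hCD := hg_opMonotone _ _ hA (hA.trans hAB) hAB
  rw [aux_conj hU (IsSelfAdjoint.of_nonneg hB) g hgBc] at hCD
  obtain ⟨V, hV, h⟩ := aux_main hgA_pos hgA_inv hCD hr2
  rw [aux_conj hU (IsSelfAdjoint.of_nonneg hgB) _
    (Real.continuous_rpow_const hr2.le).continuousOn] at h
  refine ⟨V, hV, h, U * V, mul_mem hU hV, h.trans_eq ?_⟩
  rw [star_mul]
  noncomm_ring
end
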